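/- arXiv:2604.22668 — 2 statements merged into one kernel-verified Lean document; each statement's English description precedes it below -/
import Mathlib

section
/- (Theorem 2.2: the fundamental theorem of Γ-convergence, cluster-point form.) Let X be a topological space, F_q : X → EReal (q ∈ ℕ) a sequence of functions and F : X → EReal. Assume F_q Γ-converges to F, i.e. Γ-liminf F_q(x) = Γ-limsup F_q(x) = F(x) for every x ∈ X. Suppose for each q the point x_q ∈ X is a minimizer of F_q (F_q(x_q) ≤ F_q(y) for all y ∈ X), and suppose x* ∈ X is a cluster point of the sequence (x_q) (every neighborhood of x* contains x_q for infinitely many q). Then x* is a minimizer of F: F(x*) ≤ F(y) for all y ∈ X. -/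
open Filter

noncomputable section

/-- Γ-lower limit of a sequence of extended-real-valued functionals. -/
def gammaLiminf {X : Type*} [TopologicalSpace X] (F : ℕ → X → EReal) (x : X) : EReal :=
  ⨆ N ∈ nhds x, Filter.liminf (fun q => ⨅ y ∈ N, F q y) atTop

/-- Γ-upper limit of a sequence of extended-real-valued functionals. -/
def gammaLimsup {X : Type*} [TopologicalSpace X] (F : ℕ → X → EReal) (x : X) : EReal :=
  ⨆ N ∈ nhds x, Filter.limsup (fun q => ⨅ y ∈ N, F q y) atTop

/-- `F_q` Γ-converges to `F`. -/
def GammaConvergesTo {X : Type*} [TopologicalSpace X]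
    (F : ℕ → X → EReal) (Flim : X → EReal) : Prop :=
  ∀ x : X, gammaLiminf F x = Flim x ∧ gammaLimsup F x = Flim x

/-- Theorem 2.2: the fundamental theorem of Γ-convergence, cluster-point form. -/
theorem fundamental_theorem_gamma_convergence {X : Type*} [TopologicalSpace X]
    (F : ℕ → X → EReal) (Flim : X → EReal)
    (hconv : GammaConvergesTo F Flim)
    (xs : ℕ → X) (hmin : ∀ q : ℕ, ∀ y : X, F q (xs q) ≤ F q y)
    (xstar : X)
    (hcluster : ∀ N ∈ nhds xstar, {q : ℕ | xs q ∈ N}.Infinite) :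
    ∀ y : X, Flim xstar ≤ Flim y := by
  intro y
  rw [← (hconv xstar).1, ← (hconv y).2]
  refine iSup₂_le fun N hN => ?_
  have hfreq : ∃ᶠ q in atTop, ⨅ z ∈ N, F q z ≤ ⨅ z ∈ (Set.univ : Set X), F q z :=
    (Nat.frequently_atTop_iff_infinite.2 (hcluster N hN)).mono fun q hq =>
      (iInf₂_le (xs q) hq).trans (le_iInf₂ fun z _ => hmin q z)
  exact (liminf_le_limsup_of_frequently_le hfreq).trans
    (le_iSup₂_of_le Set.univ univ_mem le_rfl)
end
end

section
/- (Proposition 2.3: sequential criterion for Γ-convergence in first-countable spaces.) Let X be a first-countable topological space, F_q : X → EReal (q ∈ ℕ) a sequence of functions and F : X → EReal. Then F_q Γ-converges to F (in the sense that Γ-liminf F_q(x) = Γ-limsup F_q(x) = F(x) for all x ∈ X) if and only if for every x ∈ X both of the following hold: (i) (limit-inferior inequality) for every sequence (x_q) in X with x_q → x, F(x) ≤ liminf_{q→∞} F_q(x_q); and (ii) (recovery sequence) there exists a sequence (x_q) in X with x_q → x such that limsup_{q→∞} F_q(x_q) ≤ F(x). -/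
open Filter

noncomputable section

/-- A diagonal argument: countably many eventual properties hold eventually along indices
tending to infinity. -/
theorem exists_tendsto_atTop_of_forall_eventually {P : ℕ → ℕ → Prop}
    (hP : ∀ k, ∀ᶠ q in atTop, P k q) :
    ∃ κ : ℕ → ℕ, Tendsto κ atTop atTop ∧ ∀ᶠ q in atTop, P (κ q) q := by
  simp only [eventually_atTop] at hP
  choose n hn using hP
  refine ⟨fun q => Nat.findGreatest (fun k => n k ≤ q) q, ?_, ?_⟩
  · refine tendsto_atTop.2 fun K => ?_
    filter_upwards [eventually_ge_atTop K, eventually_ge_atTop (n K)] with q hK hnK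
    exact Nat.le_findGreatest hK hnK
  · filter_upwards [eventually_ge_atTop (n 0)] with q hq
    exact hn _ q (Nat.findGreatest_spec (P := fun k => n k ≤ q) (Nat.zero_le q) hq)

section Gamma

variable {X : Type*} [TopologicalSpace X] {F : ℕ → X → EReal} {x : X}

theorem gammaLiminf_le_gammaLimsup : gammaLiminf F x ≤ gammaLimsup F x :=
  iSup₂_mono fun _ _ => liminf_le_limsup

theorem gammaLiminf_le_liminf {xs : ℕ → X} (hxs : Tendsto xs atTop (nhds x)) :
    gammaLiminf F x ≤ liminf (fun q => F q (xs q)) atTop :=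
  iSup₂_le fun _ hN => liminf_le_liminf <|
    (hxs.eventually_mem hN).mono fun q hq => iInf₂_le (f := fun y _ => F q y) (xs q) hq

theorem gammaLimsup_le_limsup {xs : ℕ → X} (hxs : Tendsto xs atTop (nhds x)) :
    gammaLimsup F x ≤ limsup (fun q => F q (xs q)) atTop :=
  iSup₂_le fun _ hN => limsup_le_limsup <|
    (hxs.eventually_mem hN).mono fun q hq => iInf₂_le (f := fun y _ => F q y) (xs q) hq

/-- In a first-countable space the Γ-upper limit is attained along a recovery sequence. -/
theorem exists_tendsto_limsup_le_gammaLimsup [FirstCountableTopology X] :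
    ∃ xs : ℕ → X, Tendsto xs atTop (nhds x) ∧
      limsup (fun q => F q (xs q)) atTop ≤ gammaLimsup F x := by
  rcases eq_top_or_lt_top (gammaLimsup F x) with htop | hlt
  · exact ⟨fun _ => x, tendsto_const_nhds, htop ▸ le_top⟩
  obtain ⟨U, hU⟩ := (nhds x).exists_antitone_basis
  obtain ⟨c, -, hc, hc_lim⟩ := exists_seq_strictAnti_tendsto' hlt
  have hex : ∀ k, ∀ᶠ q in atTop, ∃ y ∈ U k, F q y < c k := fun k => by
    have hlim : limsup (fun q => ⨅ y ∈ U k, F q y) atTop < c k :=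
      (le_iSup₂ (f := fun N (_ : N ∈ nhds x) => limsup (fun q => ⨅ y ∈ N, F q y) atTop)
        (U k) (hU.mem k)).trans_lt (hc k).1
    filter_upwards [eventually_lt_of_limsup_lt hlim] with q hq
    simpa only [iInf_lt_iff, exists_prop] using hq
  obtain ⟨κ, hκ, hev⟩ := exists_tendsto_atTop_of_forall_eventually hex
  have hchoice : ∀ q, ∃ y, (∃ z ∈ U (κ q), F q z < c (κ q)) → y ∈ U (κ q) ∧ F q y < c (κ q) :=
    fun q => by
      by_cases h : ∃ z ∈ U (κ q), F q z < c (κ q)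
      · exact h.imp fun _ hy _ => hy
      · exact ⟨x, fun h' => absurd h' h⟩
  choose xs hxs using hchoice
  refine ⟨xs, hU.tendsto_right_iff.2 fun K _ => ?_, le_of_forall_gt_imp_ge_of_dense fun b hb => ?_⟩
  · filter_upwards [hev, hκ.eventually_ge_atTop K] with q hq hK
    exact hU.antitone hK (hxs q hq).1
  · refine limsup_le_of_le (h := ?_)
    filter_upwards [hev, hκ.eventually (hc_lim.eventually_lt_const hb)] with q hq hlt
    exact ((hxs q hq).2.trans hlt).le

/-- In a first-countable space, every value above the Γ-lower limit bounds the lower limit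
along some convergent sequence. -/
theorem exists_tendsto_liminf_le_of_gammaLiminf_lt [FirstCountableTopology X] {c : EReal}
    (hc : gammaLiminf F x < c) :
    ∃ xs : ℕ → X, Tendsto xs atTop (nhds x) ∧ liminf (fun q => F q (xs q)) atTop ≤ c := by
  obtain ⟨U, hU⟩ := (nhds x).exists_antitone_basis
  have hex : ∀ k, ∃ᶠ q in atTop, ∃ y ∈ U k, F q y < c := fun k => by
    have hlim : liminf (fun q => ⨅ y ∈ U k, F q y) atTop < c :=
      (le_iSup₂ (f := fun N (_ : N ∈ nhds x) => liminf (fun q => ⨅ y ∈ N, F q y) atTop)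
        (U k) (hU.mem k)).trans_lt hc
    refine (frequently_lt_of_liminf_lt (h := hlim)).mono fun q hq => ?_
    simpa only [iInf_lt_iff, exists_prop] using hq
  obtain ⟨φ, hφ, hy⟩ := extraction_forall_of_frequently hex
  choose y hyU hyF using hy
  refine ⟨Function.extend φ y fun _ => x, hU.tendsto_right_iff.2 fun K _ => ?_,
    liminf_le_of_frequently_le ?_⟩
  · filter_upwards [eventually_ge_atTop (φ K)] with q hq
    by_cases h : ∃ k, φ k = q
    · obtain ⟨k, rfl⟩ := h
      rw [hφ.injective.extend_apply]
      exact hU.antitone (hφ.le_iff_le.1 hq) (hyU k)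
    · rw [Function.extend_apply' _ _ _ h]
      exact mem_of_mem_nhds (hU.mem K)
  · refine hφ.tendsto_atTop.frequently (Frequently.of_forall fun k => ?_)
    rw [hφ.injective.extend_apply]
    exact (hyF k).le

end Gamma

open Topology in
/-- Proposition 2.3: sequential criterion for Γ-convergence in first-countable
spaces. -/
theorem gamma_convergence_sequential_criterion {X : Type*} [TopologicalSpace X]
    [FirstCountableTopology X] (F : ℕ → X → EReal) (Flim : X → EReal) :
    GammaConvergesTo F Flim ↔
      ∀ x : X,
        (∀ xs : ℕ → X, Tendsto xs atTop (𝓝 x) →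
          Flim x ≤ Filter.liminf (fun q => F q (xs q)) atTop) ∧
        (∃ xs : ℕ → X, Tendsto xs atTop (𝓝 x) ∧
          Filter.limsup (fun q => F q (xs q)) atTop ≤ Flim x) := by
  refine ⟨fun h x => ⟨fun xs hxs => (h x).1 ▸ gammaLiminf_le_liminf hxs,
    (h x).2 ▸ exists_tendsto_limsup_le_gammaLimsup⟩, fun h x => ?_⟩
  obtain ⟨hinf, xs, hxs, hsup⟩ := h x
  have hle_inf : Flim x ≤ gammaLiminf F x := le_of_forall_gt_imp_ge_of_dense fun c hc => by
    obtain ⟨ys, hys, hysc⟩ := exists_tendsto_liminf_le_of_gammaLiminf_lt hc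
    exact (hinf ys hys).trans hysc
  have hsup_le : gammaLimsup F x ≤ Flim x := (gammaLimsup_le_limsup hxs).trans hsup
  exact ⟨(gammaLiminf_le_gammaLimsup.trans hsup_le).antisymm hle_inf,
    hsup_le.antisymm (hle_inf.trans gammaLiminf_le_gammaLimsup)⟩
end
end
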